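/- arXiv:2603.26368 — 6 statements merged into one kernel-verified Lean document; each statement's English description precedes it below -/
import Mathlib

section
/- Let A be a ring, F a left A-module, G ≤ F a submodule, and let α and β be A-linear automorphisms of F. For an automorphism γ of F let H_γ := {(v, γ v) : v ∈ F} ≤ F ⊕ F denote its graph, and let H := {(v, w) ∈ F ⊕ F : w − α v ∈ G}. Then H_β ≤ H if and only if the range of α − β is contained in G; and when this holds, H is the internal direct sum of H_β and 0 ⊕ G, i.e. H_β ⊔ ({0} × G) = H and H_β ⊓ ({0} × G) = 0. -/
/-! A point `(v, β v)` of the graph of `β` lies in `H` exactly when `β v - α v ∈ G`, which is the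
range condition pointwise. Under that condition any `(v, w) ∈ H` decomposes as
`(v, β v) + (0, w - β v)`, where `w - β v = (w - α v) + (α v - β v) ∈ G`; the sum is direct because
a point of a graph is determined by its first coordinate. -/

/-- Let `F` be a module over a ring `A`, `G ≤ F` a submodule, and let
`α, β` be `A`-linear automorphisms of `F`.  Let `H = {(v,w) : w − α v ∈ G}` and let
`H_β = {(v, β v)}` be the graph of `β`.  Then `H_β ≤ H` iff `range (α − β) ⊆ G`, and in
that case `H` is the internal direct sum of `H_β` and `0 × G`. -/
theorem graph_le_iff_and_splitting
    (A : Type*) [Ring A] (F : Type*) [AddCommGroup F] [Module A F]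
    (G : Submodule A F) (α β : F ≃ₗ[A] F)
    (H : Submodule A (F × F))
    (hH : H = Submodule.comap
      (LinearMap.snd A F F - (α : F →ₗ[A] F).comp (LinearMap.fst A F F)) G) :
    (LinearMap.graph (β : F →ₗ[A] F) ≤ H ↔
        LinearMap.range ((α : F →ₗ[A] F) - (β : F →ₗ[A] F)) ≤ G) ∧
    (LinearMap.range ((α : F →ₗ[A] F) - (β : F →ₗ[A] F)) ≤ G →
      LinearMap.graph (β : F →ₗ[A] F) ⊔ Submodule.prod ⊥ G = H ∧
      LinearMap.graph (β : F →ₗ[A] F) ⊓ Submodule.prod ⊥ G = ⊥) := by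
  subst hH
  -- Membership in `H` of a point of the graph is membership of `(α - β) v` in `G`, up to sign.
  have key : ∀ v : F, β v - α v ∈ G ↔ α v - β v ∈ G := fun v => by
    rw [← neg_sub, Submodule.neg_mem_iff]
  have hrange : LinearMap.range ((α : F →ₗ[A] F) - (β : F →ₗ[A] F)) ≤ G ↔
      ∀ v, α v - β v ∈ G := by
    rw [LinearMap.range_le_iff_comap, Submodule.eq_top_iff']
    rfl
  rw [hrange]
  refine ⟨⟨fun h v => ?_, ?_⟩, fun h => ⟨le_antisymm (sup_le ?_ ?_) ?_, ?_⟩⟩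
  · have hv : ((v, β v) : F × F) ∈ LinearMap.graph (β : F →ₗ[A] F) := rfl
    exact (key v).1 (h hv)
  · rintro h ⟨v, w⟩ (rfl : w = β v)
    exact (key v).2 (h v)
  · rintro ⟨v, w⟩ (rfl : w = β v)
    exact (key v).2 (h v)
  · rintro ⟨v, w⟩ ⟨hv, hw⟩
    obtain rfl : v = 0 := hv
    change w - α 0 ∈ G
    rw [map_zero, sub_zero]
    exact hw
  · rintro ⟨v, w⟩ (hvw : w - α v ∈ G)
    -- The splitting: `(v, w) = (v, β v) + (0, w - β v)`.
    refine Submodule.mem_sup.2 ⟨(v, β v), rfl, (0, w - β v), ⟨rfl, ?_⟩, by simp⟩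
    change w - β v ∈ G
    rw [← sub_add_sub_cancel w (α v) (β v)]
    exact G.add_mem hvw (h v)
  · rw [eq_bot_iff]
    rintro ⟨v, w⟩ ⟨(rfl : w = β v), hv, -⟩
    obtain rfl : v = 0 := hv
    simp
end

section
/- Let F be a finite field with q elements, b a natural number, and V = (Fin b → F). For every F-subspace W of V with dim_F W = m, one has ∑_{S ⊆ ℋ, ⋂S = W} (−1)^{|S|} = (−1)^{b−m} · q^{(b−m)(b−m−1)/2}, where the sum is over all finite subsets S of the set ℋ of hyperplanes of V whose intersection equals W. -/
/-!
Write `f U` for the sum of `(-1) ^ |S|` over the sets `S` of hyperplanes with intersection `U`,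
and induct on the codimension of `W`.

If `W = V`, only `S = ∅` contributes. Otherwise choose a hyperplane `H ⊇ W`. Adding `H` to `S`, or
removing it, changes the sign `(-1) ^ |S|` but not the subspace `⋂S ∩ H`, so the sum of `(-1) ^ |S|`
over all `S` with `⋂S ∩ H = W` vanishes (`sum_powerset_inf_inf_eq_zero`). Grouping these `S` by
`U = ⋂S` gives `∑_{U ∩ H = W} f U = 0`. Besides `W` itself, the subspaces `U` with `U ∩ H = W` have
dimension `dim W + 1` (`finrank_of_inf_eq`), and there are `q ^ (codim W - 1)` of them
(`card_inf_eq`). Hence, with `c = codim W`, the induction hypothesis yields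
`f W = - q ^ (c - 1) * (-1) ^ (c - 1) * q ^ ((c - 1) (c - 2) / 2)`, which is the claim.
-/

section Helpers

open Module

variable {F V : Type*} [Field F] [AddCommGroup V] [Module F V]

open Classical in
/-- The sign-reversing involution toggling membership of `H` in `S` does not change `⋂S ∩ H`. -/
theorem sum_powerset_inf_inf_eq_zero (A : Finset (Submodule F V)) (H W : Submodule F V)
    (hH : H ∈ A) :
    ∑ S ∈ A.powerset.filter (fun S => S.inf id ⊓ H = W), (-1 : ℤ) ^ S.card = 0 := by
  rw [Finset.sum_filter, ← Finset.insert_erase hH,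
    Finset.sum_powerset_insert (Finset.notMem_erase H A), ← Finset.sum_add_distrib]
  refine Finset.sum_eq_zero fun S hS => ?_
  have hHS : H ∉ S := fun h => Finset.notMem_erase H A (Finset.mem_powerset.1 hS h)
  have e : (insert H S).inf id ⊓ H = S.inf id ⊓ H := by
    rw [Finset.inf_insert, id, inf_comm H, inf_assoc, inf_idem]
  rw [e, Finset.card_insert_of_notMem hHS]
  split_ifs <;> ring

theorem finrank_of_inf_eq [FiniteDimensional F V] {H W U : Submodule F V}
    (hH : finrank F H + 1 = finrank F V) (hU : U ⊓ H = W) (hne : U ≠ W) :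
    finrank F U = finrank F W + 1 := by
  have hUH : ¬ U ≤ H := fun h => hne (by rw [← hU, inf_eq_left.2 h])
  have hlt : finrank F H < finrank F (U ⊔ H : Submodule F V) :=
    Submodule.finrank_lt_finrank_of_lt (right_lt_sup.2 hUH)
  have hle : finrank F (U ⊔ H : Submodule F V) ≤ finrank F V := Submodule.finrank_le _
  have := Submodule.finrank_sup_add_finrank_inf_eq U H
  rw [hU] at this
  omega

/-- For `v ∉ H`, the subspace `W + ⟨v⟩` meets the hyperplane `H ⊇ W` exactly in `W`. -/
theorem sup_span_inf_eq {H W : Submodule F V} (hWH : W ≤ H) {v : V} (hv : v ∉ H) :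
    (W ⊔ F ∙ v) ⊓ H = W := by
  have hd : (F ∙ v) ⊓ H = ⊥ := by
    rw [← disjoint_iff]
    exact (Submodule.disjoint_span_singleton_of_notMem hv).symm
  rw [sup_inf_assoc_of_le _ hWH, hd, sup_bot_eq]

theorem ncard_diff_of_inf_eq [Fintype F] [Finite V] {H W U : Submodule F V} (hU : U ⊓ H = W) :
    ((U : Set V) \ H).ncard = Fintype.card F ^ finrank F U - Fintype.card F ^ finrank F W := by
  have key (K : Submodule F V) : (K : Set V).ncard = Fintype.card F ^ finrank F K := by
    rw [← Nat.card_coe_set_eq, ← Nat.card_eq_fintype_card]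
    exact Module.natCard_eq_pow_finrank (K := F) (V := K)
  have hWU : (W : Set V) ⊆ U := by
    rw [← hU]
    exact inf_le_left (a := U)
  have e : (U : Set V) \ H = (U : Set V) \ W := by
    rw [← hU, Submodule.coe_inf, Set.sdiff_self_inter]
  rw [e, Set.ncard_sdiff hWU, key, key]

open Classical in
/-- Each `U ≠ W` with `U ∩ H = W` equals `W + ⟨v⟩` for exactly `|U \ W|` of the vectors `v ∉ H`,
so there are `|V \ H| / |U \ W|` such subspaces. -/
theorem card_inf_eq [Fintype F] [Finite V] {H W : Submodule F V} (hWH : W ≤ H)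
    (hH : finrank F H + 1 = finrank F V) {k : ℕ} (hk : finrank F W + k + 1 = finrank F V)
    (B : Finset (Submodule F V)) (hB : ∀ U, U ∈ B ↔ U ⊓ H = W ∧ U ≠ W) :
    B.card = Fintype.card F ^ k := by
  have := Fintype.ofFinite V
  set q := Fintype.card F with hq
  have hq1 : 1 < q := Fintype.one_lt_card
  have hmem {v : V} (hv : v ∉ H) : W ⊔ F ∙ v ∈ B := by
    refine (hB _).2 ⟨sup_span_inf_eq hWH hv, fun h => hv (hWH ?_)⟩
    rw [← h]
    exact Submodule.mem_sup_right (Submodule.mem_span_singleton_self v)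
  have htot : (Finset.univ.filter (fun v : V => v ∉ H)).card = q ^ finrank F V - q ^ finrank F H := by
    have h := ncard_diff_of_inf_eq (F := F) (top_inf_eq H)
    rw [finrank_top] at h
    rw [← h, ← Set.ncard_coe_finset]
    congr 1
    ext v
    simp
  have hfib : ∀ U ∈ B, ((Finset.univ.filter (fun v : V => v ∉ H)).filter
      (fun v => W ⊔ F ∙ v = U)).card = q ^ (finrank F W + 1) - q ^ finrank F W := by
    intro U hUB
    obtain ⟨hU, hne⟩ := (hB U).1 hUB
    rw [← finrank_of_inf_eq hH hU hne, ← ncard_diff_of_inf_eq hU, ← Set.ncard_coe_finset]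
    congr 1
    ext v
    simp only [Finset.coe_filter, Finset.mem_filter, Finset.mem_univ, true_and, Set.mem_ofPred_eq,
      Set.mem_sdiff, SetLike.mem_coe]
    constructor
    · rintro ⟨hv, rfl⟩
      exact ⟨Submodule.mem_sup_right (Submodule.mem_span_singleton_self v), hv⟩
    · rintro ⟨hvU, hv⟩
      refine ⟨hv, Submodule.eq_of_le_of_finrank_eq ?_ ?_⟩
      · refine sup_le (hU ▸ inf_le_left) ?_
        rwa [Submodule.span_singleton_le_iff_mem]
      · obtain ⟨h1, h2⟩ := (hB _).1 (hmem hv)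
        rw [finrank_of_inf_eq hH hU hne, finrank_of_inf_eq hH h1 h2]
  have hcount := Finset.card_eq_sum_card_fiberwise (s := Finset.univ.filter (fun v : V => v ∉ H))
    (f := fun v => W ⊔ F ∙ v) (t := B) (fun v hv => hmem (by simpa using hv))
  rw [Finset.sum_congr rfl hfib, htot, Finset.sum_const, smul_eq_mul, ← hk,
    show finrank F H = finrank F W + k by omega] at hcount
  have hpos : 0 < q ^ (finrank F W + 1) - q ^ finrank F W :=
    Nat.sub_pos_of_lt (Nat.pow_lt_pow_right hq1 (Nat.lt_succ_self _))
  refine Nat.eq_of_mul_eq_mul_right hpos (hcount.symm.trans ?_)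
  rw [Nat.mul_sub, ← pow_add, ← pow_add]
  congr 2 <;> ring

open Classical in
theorem sum_powerset_inf_eq [Fintype F] [Finite V] (A : Finset (Submodule F V))
    (hA : ∀ p : Submodule F V, p ∈ A ↔ finrank F p + 1 = finrank F V) (k : ℕ) :
    ∀ W : Submodule F V, finrank F W + k = finrank F V →
      ∑ S ∈ A.powerset.filter (fun S => S.inf id = W), (-1 : ℤ) ^ S.card =
        (-1 : ℤ) ^ k * (Fintype.card F : ℤ) ^ (k * (k - 1) / 2) := by
  induction k with
  | zero =>
    intro W hW
    obtain rfl : W = ⊤ := Submodule.eq_top_of_finrank_eq hW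
    have e : A.powerset.filter (fun S => S.inf id = ⊤) = {∅} := by
      ext S
      simp only [Finset.mem_filter, Finset.mem_powerset, Finset.mem_singleton]
      constructor
      · rintro ⟨hS, hinf⟩
        refine Finset.eq_empty_of_forall_notMem fun p hp => ?_
        have hp' : p = ⊤ := top_le_iff.1 (hinf ▸ Finset.inf_le (f := id) hp)
        have := (hA p).1 (hS hp)
        rw [hp', finrank_top] at this
        omega
      · rintro rfl
        simp
    rw [e]
    simp
  | succ k ih =>
    intro W hW
    have := Fintype.ofFinite (Submodule F V)
    have hWtop : W ≠ ⊤ := by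
      rintro rfl
      rw [finrank_top] at hW
      omega
    obtain ⟨H, hHco, hWH⟩ := (eq_top_or_exists_le_coatom W).resolve_left hWtop
    have hH : finrank F H + 1 = finrank F V := by
      have h1 : finrank F (V ⧸ H) = 1 := by
        have := isSimpleModule_iff_isCoatom.2 hHco
        exact isSimpleModule_iff_finrank_eq_one.1 this
      have h2 := Submodule.finrank_quotient_add_finrank H
      omega
    set B : Finset (Submodule F V) := Finset.univ.filter (fun U => U ⊓ H = W ∧ U ≠ W) with hBdef
    have hB (U : Submodule F V) : U ∈ B ↔ U ⊓ H = W ∧ U ≠ W := by simp [hBdef]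
    have hWB : W ∉ B := by simp [hB]
    have hzero := sum_powerset_inf_inf_eq_zero A H W ((hA H).2 hH)
    have hmaps : ∀ S ∈ A.powerset.filter (fun S => S.inf id ⊓ H = W), S.inf id ∈ insert W B := by
      intro S hS
      rw [Finset.mem_insert, hB]
      have := (Finset.mem_filter.1 hS).2
      tauto
    have hfilter : ∀ U ∈ insert W B,
        ∑ S ∈ (A.powerset.filter (fun S => S.inf id ⊓ H = W)).filter (fun S => S.inf id = U),
          (-1 : ℤ) ^ S.card =
        ∑ S ∈ A.powerset.filter (fun S => S.inf id = U), (-1 : ℤ) ^ S.card := by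
      intro U hU
      have hUH : U ⊓ H = W := by
        rcases Finset.mem_insert.1 hU with rfl | h
        · exact inf_eq_left.2 hWH
        · exact ((hB U).1 h).1
      rw [Finset.filter_filter]
      refine Finset.sum_congr (Finset.filter_congr fun S _ => ?_) fun _ _ => rfl
      exact ⟨fun h => h.2, fun h => ⟨h ▸ hUH, h⟩⟩
    rw [← Finset.sum_fiberwise_of_maps_to hmaps, Finset.sum_congr rfl hfilter,
      Finset.sum_insert hWB] at hzero
    have hsum : ∀ U ∈ B, ∑ S ∈ A.powerset.filter (fun S => S.inf id = U), (-1 : ℤ) ^ S.card =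
        (-1 : ℤ) ^ k * (Fintype.card F : ℤ) ^ (k * (k - 1) / 2) := by
      intro U hU
      obtain ⟨h1, h2⟩ := (hB U).1 hU
      refine ih U ?_
      rw [finrank_of_inf_eq hH h1 h2]
      omega
    rw [Finset.sum_congr rfl hsum, Finset.sum_const, card_inf_eq hWH hH (k := k) (by omega) B hB,
      nsmul_eq_mul] at hzero
    have hexp : (k + 1) * (k + 1 - 1) / 2 = k + k * (k - 1) / 2 := by
      rw [← Finset.sum_range_id, ← Finset.sum_range_id, Finset.sum_range_succ, add_comm]
    rw [hexp, eq_neg_of_add_eq_zero_left hzero]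
    push_cast
    ring

end Helpers


open Classical in
/-- Let `F` be a finite field with `q` elements, `V = Fin b → F`, and
let `ℋ` be the set of hyperplanes (subspaces of dimension `b − 1`) of `V`.  For every
subspace `W` of `V` of dimension `m`,
`∑_{S ⊆ ℋ, ⋂S = W} (−1)^{|S|} = (−1)^{b−m} q^{(b−m)(b−m−1)/2}` (empty intersection
being `V`). -/
theorem alternating_sum_over_hyperplane_subsets_eq
    (F : Type*) [Field F] [Fintype F] (q b m : ℕ) (hq : Fintype.card F = q)
    (ℋ : Finset (Submodule F (Fin b → F)))
    (hℋ : ∀ p : Submodule F (Fin b → F), p ∈ ℋ ↔ Module.finrank F ↥p + 1 = b)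
    (W : Submodule F (Fin b → F)) (hW : Module.finrank F ↥W = m) :
    ∑ S ∈ ℋ.powerset.filter (fun S => S.inf id = W), (-1 : ℤ) ^ S.card =
      (-1 : ℤ) ^ (b - m) * (q : ℤ) ^ ((b - m) * (b - m - 1) / 2) := by
  subst hq hW
  have hb : Module.finrank F (Fin b → F) = b := by simp
  have hle : Module.finrank F W ≤ b := (Submodule.finrank_le W).trans_eq hb
  exact sum_powerset_inf_eq ℋ (by rwa [hb]) _ W (by omega)
end

section
/- Let F be a finite field with q elements, b a natural number, and V = (Fin b → F). If W_1 and W_2 are F-subspaces of V with dim_F W_1 = dim_F W_2, then ∑_{S ⊆ ℋ, ⋂S = W_1} (−1)^{|S|} = ∑_{S ⊆ ℋ, ⋂S = W_2} (−1)^{|S|}, where each sum is over the finite subsets S of the set ℋ of hyperplanes of V whose intersection equals the indicated subspace. -/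
/-!
The linear group of `V` acts transitively on the subspaces of each fixed dimension
(`exists_linearEquiv_map_eq`), so some automorphism `g` of `V` takes `W₁` to `W₂`. The lattice
automorphism `p ↦ g p` permutes the hyperplanes and commutes with intersections, hence
`S ↦ {g p | p ∈ S}` is a cardinality-preserving bijection from the sets of hyperplanes with
intersection `W₁` onto those with intersection `W₂`, and it matches the two sums term by term.
-/

/-- The general linear group acts transitively on subspaces of a fixed dimension. -/
theorem exists_linearEquiv_map_eq {K V : Type*} [Field K] [AddCommGroup V] [Module K V]
    [FiniteDimensional K V] (W₁ W₂ : Submodule K V)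
    (h : Module.finrank K W₁ = Module.finrank K W₂) :
    ∃ g : V ≃ₗ[K] V, W₁.map (g : V →ₗ[K] V) = W₂ := by
  obtain ⟨g, hg⟩ := Submodule.exists_linearEquiv_restrict_eq (LinearEquiv.ofFinrankEq W₁ W₂ h)
  refine ⟨g, Submodule.eq_of_le_of_finrank_eq ?_ ?_⟩
  · rintro _ ⟨x, hx, rfl⟩
    have := hg ⟨x, hx⟩
    simp only [LinearEquiv.coe_coe] at this ⊢
    rw [← this]
    exact Subtype.coe_prop _
  · rw [LinearEquiv.finrank_map_eq, h]


open Classical in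
/-- Let `F` be a finite field with `q` elements, `V = Fin b → F`, and
let `ℋ` be the set of hyperplanes (subspaces of dimension `b − 1`) of `V`.  If `W₁` and
`W₂` are subspaces of `V` of the same dimension, then
`∑_{S ⊆ ℋ, ⋂S = W₁} (−1)^{|S|} = ∑_{S ⊆ ℋ, ⋂S = W₂} (−1)^{|S|}` (empty intersection
being `V`). -/
theorem alternating_sum_over_hyperplane_subsets_dim_invariant
    (F : Type*) [Field F] [Fintype F] (q b : ℕ) (hq : Fintype.card F = q)
    (ℋ : Finset (Submodule F (Fin b → F)))
    (hℋ : ∀ p : Submodule F (Fin b → F), p ∈ ℋ ↔ Module.finrank F ↥p + 1 = b)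
    (W₁ W₂ : Submodule F (Fin b → F))
    (hdim : Module.finrank F ↥W₁ = Module.finrank F ↥W₂) :
    ∑ S ∈ ℋ.powerset.filter (fun S => S.inf id = W₁), (-1 : ℤ) ^ S.card =
      ∑ S ∈ ℋ.powerset.filter (fun S => S.inf id = W₂), (-1 : ℤ) ^ S.card := by
  obtain ⟨g, hg⟩ := exists_linearEquiv_map_eq W₁ W₂ hdim
  let e := Submodule.orderIsoMapComap g
  have he : ∀ p, e p = p.map (g : (Fin b → F) →ₗ[F] (Fin b → F)) := fun _ => rfl
  have hinf : ∀ S : Finset (Submodule F (Fin b → F)),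
      (S.map e.toEquiv.toEmbedding).inf id = e (S.inf id) := fun S => by
    rw [Finset.inf_map, map_finset_inf]
    rfl
  have hmem : ∀ p, e p ∈ ℋ ↔ p ∈ ℋ := fun p => by
    rw [hℋ, hℋ, he, LinearEquiv.finrank_map_eq]
  refine Finset.sum_equiv e.toEquiv.finsetCongr (fun S => ?_) (fun S _ => ?_)
  · simp only [Finset.mem_filter, Finset.mem_powerset, Equiv.finsetCongr_apply, hinf]
    have hW : e W₁ = W₂ := hg
    rw [← hW, e.injective.eq_iff]
    refine and_congr_left fun _ => ?_
    simp only [Finset.subset_iff, Finset.forall_mem_map]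
    exact forall₂_congr fun p _ => (hmem p).symm
  · rw [Equiv.finsetCongr_apply, Finset.card_map]
end

section
/- Let F be a finite field with q elements, b a natural number, and V = (Fin b → F). For every F-subspace W of V, one has ∑_{S ⊆ ℋ, ⋂S = W} (−1)^{|S|} = ∑_{T ⊆ ℋ', ⋂T = 0} (−1)^{|T|}, where ℋ is the set of hyperplanes of V, ℋ' is the set of hyperplanes of the quotient F-vector space V/W, the first sum is over finite subsets of ℋ whose intersection equals W, and the second is over finite subsets of ℋ' whose intersection is the zero subspace of V/W. -/
/-!
Pulling back along the quotient map `V → V/W` identifies the subspaces of `V/W` with the subspaces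
of `V` containing `W`; it preserves codimension (`finrank_comap_mkQ_add_one_iff`) and intersections
(`comap_mkQ_finset_inf`), and sends `0` to `W`. Every member of a family of hyperplanes with
intersection `W` contains `W`, so pulling back is a cardinality-preserving bijection between the
families `T` of hyperplanes of `V/W` with `⋂T = 0` and the families `S` of hyperplanes of `V` with
`⋂S = W`, and the two sums agree term by term.
-/

/-- Pullback along `V → V/W` preserves and reflects being a hyperplane, because
`V / π⁻¹(p) ≃ (V/W) / p`. -/
theorem finrank_comap_mkQ_add_one_iff {F V : Type*} [Field F] [AddCommGroup V] [Module F V]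
    [FiniteDimensional F V] (W : Submodule F V) (p : Submodule F (V ⧸ W)) :
    Module.finrank F (p.comap W.mkQ) + 1 = Module.finrank F V ↔
      Module.finrank F p + 1 = Module.finrank F (V ⧸ W) := by
  have e := (Submodule.quotientQuotientEquivQuotient W (p.comap W.mkQ)
    (W.le_comap_mkQ p)).finrank_eq
  rw [Submodule.map_comap_eq_of_surjective W.mkQ_surjective] at e
  have h₁ := (p.comap W.mkQ).finrank_quotient_add_finrank
  have h₂ := p.finrank_quotient_add_finrank
  omega

/-- For `T = ∅` this says that the pullback of the whole quotient is the whole space. -/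
theorem comap_mkQ_finset_inf {F V : Type*} [Field F] [AddCommGroup V] [Module F V]
    (W : Submodule F V) (T : Finset (Submodule F (V ⧸ W))) :
    (T.map (Submodule.comapMkQOrderEmbedding W).toEmbedding).inf id =
      (T.inf id).comap W.mkQ := by
  rw [Finset.inf_map]
  exact (Finset.apply_inf_eq_inf_comp (Submodule.comap W.mkQ)
    (fun _ _ => rfl) (Submodule.comap_top _)).symm


open Classical in
/-- Let `F` be a finite field with `q` elements, `V = Fin b → F`, `W` a
subspace of `V`, `ℋ` the set of hyperplanes of `V` (subspaces of dimension `b − 1`), and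
`ℋ'` the set of hyperplanes (codimension-one subspaces) of the quotient `V/W`.  Then
`∑_{S ⊆ ℋ, ⋂S = W} (−1)^{|S|} = ∑_{T ⊆ ℋ', ⋂T = 0} (−1)^{|T|}` (empty intersections
being the respective ambient spaces). -/
theorem alternating_sum_reduction_to_quotient
    (F : Type*) [Field F] [Fintype F] (q b : ℕ) (hq : Fintype.card F = q)
    (W : Submodule F (Fin b → F))
    (ℋ : Finset (Submodule F (Fin b → F)))
    (hℋ : ∀ p : Submodule F (Fin b → F), p ∈ ℋ ↔ Module.finrank F ↥p + 1 = b)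
    (ℋ' : Finset (Submodule F ((Fin b → F) ⧸ W)))
    (hℋ' : ∀ p : Submodule F ((Fin b → F) ⧸ W),
      p ∈ ℋ' ↔ Module.finrank F ↥p + 1 = Module.finrank F ((Fin b → F) ⧸ W)) :
    ∑ S ∈ ℋ.powerset.filter (fun S => S.inf id = W), (-1 : ℤ) ^ S.card =
      ∑ T ∈ ℋ'.powerset.filter (fun T => T.inf id = ⊥), (-1 : ℤ) ^ T.card := by
  symm
  have hmem : ∀ p : Submodule F ((Fin b → F) ⧸ W), p.comap W.mkQ ∈ ℋ ↔ p ∈ ℋ' := by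
    intro p
    rw [hℋ, hℋ', ← finrank_comap_mkQ_add_one_iff, Module.finrank_fin_fun]
  refine Finset.sum_bij
    (fun T _ => T.map (Submodule.comapMkQOrderEmbedding W).toEmbedding) ?_ ?_ ?_ ?_
  · intro T hT
    rw [Finset.mem_filter, Finset.mem_powerset] at hT ⊢
    refine ⟨?_, ?_⟩
    · intro H hH
      obtain ⟨p, hp, rfl⟩ := Finset.mem_map.1 hH
      exact (hmem p).2 (hT.1 hp)
    · rw [comap_mkQ_finset_inf, hT.2]
      exact W.ker_mkQ
  · intro T₁ _ T₂ _ h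
    exact Finset.map_injective _ h
  · intro S hS
    rw [Finset.mem_filter, Finset.mem_powerset] at hS
    have hle : ∀ H ∈ S, W ≤ H := fun H hH => hS.2 ▸ Finset.inf_le (f := id) hH
    have hmap : (ℋ'.filter (fun p => p.comap W.mkQ ∈ S)).map
        (Submodule.comapMkQOrderEmbedding W).toEmbedding = S := by
      ext H
      rw [Finset.mem_map]
      constructor
      · rintro ⟨p, hp, rfl⟩
        exact (Finset.mem_filter.1 hp).2
      · intro hH
        have hc : (H.map W.mkQ).comap W.mkQ = H := by
          rw [Submodule.comap_map_mkQ, sup_eq_right.2 (hle H hH)]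
        refine ⟨H.map W.mkQ, Finset.mem_filter.2 ⟨(hmem _).1 ?_, ?_⟩, hc⟩
        · rw [hc]; exact hS.1 hH
        · rwa [hc]
    refine ⟨_, Finset.mem_filter.2 ⟨Finset.mem_powerset.2 (Finset.filter_subset _ _), ?_⟩, hmap⟩
    -- Both `⋂T` and `0` pull back to `W`, and pullback along a surjection is injective.
    apply Submodule.comap_injective_of_surjective W.mkQ_surjective
    rw [← comap_mkQ_finset_inf, hmap, hS.2]
    exact W.ker_mkQ.symm
  · intro T _
    rw [Finset.card_map]
end

section
/- Let F be a finite field with q elements and let G := 𝔽 ⋊ 𝔽ˣ be the semidirect product of the additive group of F by its multiplicative group Fˣ, where a ∈ Fˣ acts on (F, +) by multiplication by a. Let (V, ρ) be a nonzero finite-dimensional complex representation of G whose only ρ-invariant subspaces are 0 and V (i.e. ρ is irreducible). If no nonzero vector of V is fixed by every element of the normal subgroup {(b, 1) : b ∈ F}, then dim_ℂ V = q − 1 and there exists a nonzero vector of V fixed by every element of the subgroup {(0, a) : a ∈ Fˣ}. -/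
/-!
Fix a primitive additive character `ψ` of `F`; every additive character of `F` is then
`c ↦ ψ (-(x * c))` for exactly one `x : F`. The operator
`fourierOp ψ ρ x = ∑ b, ψ (x * b) • ρ (b, 1)` is `q` times the projection of `V` onto the
eigenspace of that character, and `∑ x, fourierOp ψ ρ x = q`. Hence some `fourierOp ψ ρ x v` is
nonzero, and `x ≠ 0` because the translations have no nonzero fixed vector. This gives a weight
vector `w` of nonzero weight `x`. Its translates `ρ (0, a) w`, for `a : Fˣ`, have the pairwise
distinct weights `x * a⁻¹`, so they are linearly independent. Their span is invariant under the
whole group, so by irreducibility they form a basis of `V` permuted simply transitively by `Fˣ`: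
the dimension is `q - 1`, and the sum of the basis is a nonzero vector fixed by `Fˣ`.
-/

/-- The action of `Fˣ` on the additive group of `F` by multiplication, expressed as a
homomorphism to the automorphism group of the (multiplicatively written) additive group
of `F`.  This is the data needed to form the "ax + b" group `F ⋊ Fˣ`. -/
def mulActionHom (F : Type*) [Field F] : Fˣ →* MulAut (Multiplicative F) where
  toFun a := AddEquiv.toMultiplicative (DistribMulAction.toAddAut Fˣ F a)
  map_one' := by ext x; simp
  map_mul' a b := by ext x; simp [mul_smul]

section AxbGroup

variable {F : Type*} [Field F] {V : Type*} [AddCommGroup V] [Module ℂ V]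

/-- `w` lies in the eigenspace of the character `c ↦ ψ (-(x * c))` of the translation subgroup.
The zero vector is allowed. -/
def IsWeight (ψ : AddChar F ℂ) (ρ : Representation ℂ (Multiplicative F ⋊[mulActionHom F] Fˣ) V)
    (x : F) (w : V) : Prop :=
  ∀ c : F, ρ (SemidirectProduct.inl (Multiplicative.ofAdd c)) w = ψ (-(x * c)) • w

/-- The Fourier coefficient at `x` of `ρ` restricted to translations: the unnormalized projection
onto the vectors of weight `x`. -/
noncomputable def fourierOp [Fintype F] (ψ : AddChar F ℂ)
    (ρ : Representation ℂ (Multiplicative F ⋊[mulActionHom F] Fˣ) V) (x : F) : V →ₗ[ℂ] V :=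
  ∑ b : F, ψ (x * b) • ρ (SemidirectProduct.inl (Multiplicative.ofAdd b))

variable {ψ : AddChar F ℂ} {ρ : Representation ℂ (Multiplicative F ⋊[mulActionHom F] Fˣ) V}

lemma fourierOp_apply [Fintype F] (x : F) (v : V) :
    fourierOp ψ ρ x v =
      ∑ b : F, ψ (x * b) • ρ (SemidirectProduct.inl (Multiplicative.ofAdd b)) v := by
  simp [fourierOp, LinearMap.sum_apply]

/-- Fourier inversion at the identity. -/
lemma sum_fourierOp [Fintype F] (hψ : ψ.IsPrimitive) (v : V) :
    ∑ x : F, fourierOp ψ ρ x v = (Fintype.card F : ℂ) • v := by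
  classical
  simp_rw [fourierOp_apply]
  rw [Finset.sum_comm]
  simp_rw [← Finset.sum_smul, AddChar.sum_mulShift _ hψ]
  simp [ite_smul]

lemma isWeight_fourierOp [Fintype F] (x : F) (v : V) : IsWeight ψ ρ x (fourierOp ψ ρ x v) := by
  intro c
  rw [fourierOp_apply, map_sum, Finset.smul_sum]
  refine Fintype.sum_equiv (Equiv.addLeft c) _ _ fun b => ?_
  rw [map_smul, ← Module.End.mul_apply, ← map_mul, ← map_mul, ← ofAdd_add, smul_smul,
    ← AddChar.map_add_eq_mul, Equiv.coe_addLeft]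
  congr 2
  ring

/-- Orthogonality of characters. -/
lemma IsWeight.fourierOp_eq [Fintype F] [DecidableEq F] (hψ : ψ.IsPrimitive) {y : F} {w : V}
    (hw : IsWeight ψ ρ y w) (x : F) :
    fourierOp ψ ρ x w = if x = y then (Fintype.card F : ℂ) • w else 0 := by
  have h : ∀ b : F, ψ (x * b) • ρ (SemidirectProduct.inl (Multiplicative.ofAdd b)) w
      = ψ (b * (x - y)) • w := fun b => by
    rw [hw b, smul_smul, ← AddChar.map_add_eq_mul]
    congr 2
    ring
  simp_rw [fourierOp_apply, h, ← Finset.sum_smul, AddChar.sum_mulShift _ hψ, sub_eq_zero]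
  split_ifs <;> simp

lemma inl_mul_inr (c : F) (a : Fˣ) :
    (SemidirectProduct.inl (Multiplicative.ofAdd c) * SemidirectProduct.inr a :
      Multiplicative F ⋊[mulActionHom F] Fˣ) =
    SemidirectProduct.inr a *
      SemidirectProduct.inl (Multiplicative.ofAdd ((a⁻¹ : Fˣ) * c : F)) := by
  apply SemidirectProduct.ext
  · have h : mulActionHom F a (Multiplicative.ofAdd ((a⁻¹ : Fˣ) * c : F)) =
        Multiplicative.ofAdd ((a : F) * ((a⁻¹ : Fˣ) * c)) := rfl
    rw [SemidirectProduct.mul_left, SemidirectProduct.mul_left, SemidirectProduct.left_inr,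
      SemidirectProduct.left_inl, SemidirectProduct.left_inl,
      SemidirectProduct.right_inr, h, Units.mul_inv_cancel_left, map_one, mul_one, one_mul]
  · simp

/-- Dilations permute the weight spaces: the conjugate of a character by `a` has parameter
`x * a⁻¹`. -/
lemma IsWeight.inr {x : F} {w : V} (hw : IsWeight ψ ρ x w) (a : Fˣ) :
    IsWeight ψ ρ (x * (a⁻¹ : Fˣ)) (ρ (SemidirectProduct.inr a) w) := by
  intro c
  rw [← Module.End.mul_apply, ← map_mul, inl_mul_inr, map_mul, Module.End.mul_apply, hw, map_smul,
    mul_assoc]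

lemma inr_apply_ne_zero {w : V} (hw0 : w ≠ 0) (a : Fˣ) :
    ρ (SemidirectProduct.inr a) w ≠ 0 := by
  intro h
  apply hw0
  have := congrArg (ρ (SemidirectProduct.inr a⁻¹)) h
  rwa [← Module.End.mul_apply, ← map_mul, ← map_mul, inv_mul_cancel, map_one, map_one, map_zero,
    Module.End.one_apply] at this

/-- The dilates of a nonzero vector of nonzero weight have distinct weights, so `fourierOp`
isolates each coefficient of a linear relation among them. -/
lemma IsWeight.linearIndependent [Fintype F] (hψ : ψ.IsPrimitive) {x : F} (hx : x ≠ 0) {w : V}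
    (hw : IsWeight ψ ρ x w) (hw0 : w ≠ 0) :
    LinearIndependent ℂ fun a : Fˣ => ρ (SemidirectProduct.inr a) w := by
  classical
  rw [Fintype.linearIndependent_iff]
  intro g hg s
  have h := congrArg (fourierOp ψ ρ (x * (s⁻¹ : Fˣ))) hg
  have hinj : ∀ a : Fˣ, x * ((s⁻¹ : Fˣ) : F) = x * (a⁻¹ : Fˣ) ↔ s = a := fun a => by
    rw [mul_right_inj' hx, Units.val_inj, inv_inj]
  simp_rw [map_sum, map_smul, (hw.inr _).fourierOp_eq hψ, hinj] at h
  simpa [inr_apply_ne_zero hw0] using h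

/-- The span of the dilates of a weight vector is a subrepresentation. -/
lemma IsWeight.span_invariant {x : F} {w : V} (hw : IsWeight ψ ρ x w)
    (g : Multiplicative F ⋊[mulActionHom F] Fˣ) (v : V)
    (hv : v ∈ Submodule.span ℂ (Set.range fun a : Fˣ => ρ (SemidirectProduct.inr a) w)) :
    ρ g v ∈ Submodule.span ℂ (Set.range fun a : Fˣ => ρ (SemidirectProduct.inr a) w) := by
  induction hv using Submodule.span_induction with
  | zero => simp
  | add u v _ _ hu hv => rw [map_add]; exact add_mem hu hv
  | smul z u _ hu => rw [map_smul]; exact Submodule.smul_mem _ z hu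
  | mem u hu =>
    obtain ⟨a, rfl⟩ := hu
    have h := hw.inr (g.right * a) (Multiplicative.toAdd g.left)
    rw [ofAdd_toAdd, map_mul, map_mul, Module.End.mul_apply, ← Module.End.mul_apply, ← map_mul,
      SemidirectProduct.inl_left_mul_inr_right, ← Module.End.mul_apply (ρ (.inr g.right)),
      ← map_mul ρ (.inr g.right), ← map_mul] at h
    simp only [h]
    exact Submodule.smul_mem _ _ (Submodule.subset_span ⟨g.right * a, rfl⟩)

end AxbGroup

/-- Let `F` be a finite field with `q` elements and
`G = F ⋊ Fˣ` the semidirect product in which `a ∈ Fˣ` acts on `(F, +)` by multiplication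
by `a`.  If `(V, ρ)` is a nonzero finite-dimensional irreducible complex representation
of `G` such that no nonzero vector is fixed by every element of the normal subgroup
`{(b, 1) : b ∈ F}`, then `dim V = q − 1` and some nonzero vector of `V` is fixed by
every element of the subgroup `{(0, a) : a ∈ Fˣ}`. -/
theorem axb_group_rep_nontrivial_on_normal_part
    (F : Type*) [Field F] [Fintype F] (q : ℕ) (hq : Fintype.card F = q)
    (V : Type*) [AddCommGroup V] [Module ℂ V] [FiniteDimensional ℂ V] [Nontrivial V]
    (ρ : Representation ℂ (Multiplicative F ⋊[mulActionHom F] Fˣ) V)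
    (hirr : ∀ U : Submodule ℂ V,
      (∀ (g : Multiplicative F ⋊[mulActionHom F] Fˣ) (v : V), v ∈ U → ρ g v ∈ U) →
        U = ⊥ ∨ U = ⊤)
    (hN : ¬ ∃ v : V, v ≠ 0 ∧ ∀ b : F,
      ρ (SemidirectProduct.inl (Multiplicative.ofAdd b)) v = v) :
    Module.finrank ℂ V = q - 1 ∧
      ∃ v : V, v ≠ 0 ∧ ∀ a : Fˣ, ρ (SemidirectProduct.inr a) v = v := by
  classical
  obtain ⟨ψ, hψ⟩ : ∃ ψ : AddChar F ℂ, ψ.IsPrimitive :=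
    ⟨_, AddChar.FiniteField.primitiveChar_to_Complex_isPrimitive F⟩
  obtain ⟨x, w, hw0, hw⟩ : ∃ (x : F) (w : V), w ≠ 0 ∧ IsWeight ψ ρ x w := by
    obtain ⟨v, hv⟩ := exists_ne (0 : V)
    have hsum : ∑ x : F, fourierOp ψ ρ x v ≠ 0 := by
      rw [sum_fourierOp hψ]
      exact smul_ne_zero (Nat.cast_ne_zero.2 Fintype.card_ne_zero) hv
    obtain ⟨x, -, hx⟩ := Finset.exists_ne_zero_of_sum_ne_zero hsum
    exact ⟨x, _, hx, isWeight_fourierOp x v⟩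
  have hx : x ≠ 0 := by
    rintro rfl
    exact hN ⟨w, hw0, fun b => by simpa using hw b⟩
  have hli := hw.linearIndependent hψ hx hw0
  have htop : Submodule.span ℂ (Set.range fun a : Fˣ => ρ (SemidirectProduct.inr a) w) = ⊤ := by
    refine (hirr _ hw.span_invariant).resolve_left fun hbot => ?_
    exact inr_apply_ne_zero hw0 1
      ((Submodule.mem_bot ℂ).1 (hbot.le (Submodule.subset_span ⟨1, rfl⟩)))
  refine ⟨?_, ∑ a : Fˣ, ρ (SemidirectProduct.inr a) w, fun h0 => ?_, fun a => ?_⟩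
  · rw [← finrank_top, ← htop, finrank_span_eq_card hli, Fintype.card_units, hq]
  · exact one_ne_zero (Fintype.linearIndependent_iff.1 hli (fun _ => 1) (by simpa using h0) 1)
  · rw [map_sum]
    refine Fintype.sum_equiv (Equiv.mulLeft a) _ _ fun b => ?_
    rw [← Module.End.mul_apply, ← map_mul, ← map_mul, Equiv.coe_mulLeft]
end

section
/- Let F be a finite field and let V be a nonzero finite-dimensional complex representation of the additive group F × F. Then there exist a nonzero vector v ∈ V and a pair (x, y) ∈ F × F with (x, y) ≠ (0, 0) such that v is fixed by every element of the subgroup {(z, w) ∈ F × F : x·z + y·w = 0}. -/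
/-!
Suppose that no line subgroup fixes a nonzero vector, and let `q = |F|`. For `v` in `V` and `p ≠ 0`,
the line sum `∑ t, ρ (t • p) v` is fixed by the line `F p`, hence vanishes; the full sum
`∑ p, ρ p v` is fixed by the whole group, hence vanishes as well. Now evaluate
`∑ p, ∑ t, ρ (t • p) v` in two ways. Summing over `t` first, only `p = 0` contributes, giving `q • v`.
Summing over `p` first, each `t ≠ 0` yields the full sum, so only `t = 0` contributes, giving
`q ^ 2 • v`. As `q ≥ 2`, this forces `v = 0`. This averaging argument replaces the decomposition of
`V` into characters.
-/

/-- Let `F` be a finite field and `V` a nonzero finite-dimensional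
complex representation of the additive group `F × F`.  Then there is a nonzero vector
`v ∈ V` and a pair `(x, y) ≠ (0, 0)` in `F × F` such that `v` is fixed by every element
of the subgroup `{(z, w) : x z + y w = 0}`. -/
theorem exists_vector_fixed_by_line_subgroup
    (F : Type*) [Field F] [Fintype F]
    (V : Type*) [AddCommGroup V] [Module ℂ V] [FiniteDimensional ℂ V] [Nontrivial V]
    (ρ : Representation ℂ (Multiplicative (F × F)) V) :
    ∃ v : V, v ≠ 0 ∧ ∃ x y : F, (x, y) ≠ ((0 : F), (0 : F)) ∧
      ∀ z w : F, x * z + y * w = 0 →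
        ρ (Multiplicative.ofAdd ((z, w) : F × F)) v = v := by
  classical
  by_contra hcon
  have H : ∀ v : V, ∀ x y : F, (x, y) ≠ ((0 : F), (0 : F)) →
      (∀ z w : F, x * z + y * w = 0 →
        ρ (Multiplicative.ofAdd ((z, w) : F × F)) v = v) → v = 0 := by
    intro v x y hxy hfix
    by_contra hv
    exact hcon ⟨v, hv, x, y, hxy, hfix⟩
  obtain ⟨v, hv⟩ := exists_ne (0 : V)
  have hmul : ∀ (a b : F × F) (u : V), ρ (Multiplicative.ofAdd a) (ρ (Multiplicative.ofAdd b) u) =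
      ρ (Multiplicative.ofAdd (a + b)) u := by
    intro a b u
    rw [ofAdd_add, map_mul, Module.End.mul_apply]
  have hzero : ρ (Multiplicative.ofAdd (0 : F × F)) v = v := by
    rw [ofAdd_zero, map_one, Module.End.one_apply]
  have hline : ∀ p : F × F, p ≠ 0 → ∑ t : F, ρ (Multiplicative.ofAdd (t • p)) v = 0 := by
    rintro ⟨a, b⟩ hp
    -- The line spanned by `(a, b)` is the kernel of `(z, w) ↦ -b * z + a * w`.
    refine H _ (-b) a ?_ ?_
    · intro h
      simp only [Prod.mk.injEq, neg_eq_zero] at h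
      exact hp (by simp [h.1, h.2])
    · intro z w hzw
      obtain ⟨s, hs⟩ : ∃ s : F, (z, w) = s • (a, b) := by
        by_cases ha : a = 0
        · have hb : b ≠ 0 := fun hb => hp (by simp [ha, hb])
          have hz : z = 0 := by simpa [ha, hb] using hzw
          exact ⟨w / b, by simp [ha, hz, hb]⟩
        · refine ⟨z / a, ?_⟩
          have hw : w = z / a * b := by
            field_simp
            linear_combination hzw
          simp [ha, ← hw]
      rw [hs, map_sum]
      simp only [hmul, ← add_smul]
      exact Equiv.sum_comp (Equiv.addLeft s) (fun t : F => ρ (Multiplicative.ofAdd (t • (a, b))) v)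
  have hall : ∑ p : F × F, ρ (Multiplicative.ofAdd p) v = 0 := by
    refine H _ 1 0 (by simp) ?_
    intro z w _
    rw [map_sum]
    simp only [hmul]
    exact Equiv.sum_comp (Equiv.addLeft (z, w)) (fun p : F × F => ρ (Multiplicative.ofAdd p) v)
  have h1 : ∑ p : F × F, ∑ t : F, ρ (Multiplicative.ofAdd (t • p)) v = Fintype.card F • v := by
    rw [Finset.sum_eq_single 0 (fun p _ hp => hline p hp) (by simp)]
    simp only [smul_zero, hzero, Finset.sum_const, Finset.card_univ]
  have h2 : ∑ p : F × F, ∑ t : F, ρ (Multiplicative.ofAdd (t • p)) v =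
      (Fintype.card F * Fintype.card F) • v := by
    rw [Finset.sum_comm, Finset.sum_eq_single 0 _ (by simp)]
    · simp only [zero_smul, hzero, Finset.sum_const, Finset.card_univ, Fintype.card_prod]
    · intro t _ ht
      rw [← hall]
      exact Equiv.sum_comp (MulAction.toPerm (Units.mk0 t ht))
        (fun p : F × F => ρ (Multiplicative.ofAdd p) v)
  have h3 : ((Fintype.card F : ℂ) * Fintype.card F - Fintype.card F) • v = 0 := by
    rw [sub_smul, ← Nat.cast_mul, Nat.cast_smul_eq_nsmul, Nat.cast_smul_eq_nsmul, ← h1, ← h2,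
      sub_self]
  have hq : 1 < Fintype.card F := Fintype.one_lt_card
  rcases smul_eq_zero.mp h3 with h | h
  · have h' : Fintype.card F * Fintype.card F = Fintype.card F := by
      exact_mod_cast sub_eq_zero.mp h
    nlinarith
  · exact hv h
end
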